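/- Let n ≥ 1, k ≥ 1, and let τ = (τ₀,…,τ_{k−1}) : (ℝⁿ)ᵏ → (ℝⁿ)ᵏ be differentiable. Suppose the consistency identity holds for all z ∈ (ℝⁿ)ᵏ and u ∈ ℝⁿ. Then for every z: the n×n block Dτ(z)_{i,k−1} of the Jacobian is the zero matrix for every 0 ≤ i ≤ k−2, and Dτ(z)_{k−1,k−1} = B̂(τ(z))B(z)⁻¹, a diagonal matrix with strictly positive diagonal entries. -/

import Mathlib

/-!
The identity is affine in `u`. Subtracting its instance at `u = 0` leaves
`(0, …, 0, Bhat(τ z) u) = Dτ(z) (0, …, 0, B(z) u)`, and since `B(z)` is an invertible diagonal matrix,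
`B(z) u` can be made any standard basis vector. This reads off the last block column of `Dτ(z)`.
-/

open Matrix

noncomputable section

/-- `shiftVec f last` is the vector `(f₁, …, f_{k-1}, last)` obtained from
`f = (f₀, …, f_{k-1})` by shifting the blocks and putting `last` in the last block. -/
def shiftVec {n k : ℕ} (f : Fin k → Fin n → ℝ) (last : Fin n → ℝ) : Fin k → Fin n → ℝ :=
  fun i => if h : (i : ℕ) + 1 < k then f ⟨(i : ℕ) + 1, h⟩ else last

/-- The `(i,j)`-th `n × n` block of the Jacobian of `τ` at `z`. -/
def jacBlock {n k : ℕ} (τ : (Fin k → Fin n → ℝ) → Fin k → Fin n → ℝ)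
    (z : Fin k → Fin n → ℝ) (i j : Fin k) : Matrix (Fin n) (Fin n) ℝ :=
  Matrix.of fun a b => fderiv ℝ τ z (Pi.single j (Pi.single b 1)) i a

/-- The consistency identity:
`(τ₁(z), …, τ_{k-1}(z), Fhat(τ(z)) + Bhat(τ(z))u) = Dτ(z) ⬝ (z₁, …, z_{k-1}, F(z) + B(z)u)`. -/
def Consistent {n k : ℕ} (F Fhat : (Fin k → Fin n → ℝ) → Fin n → ℝ)
    (B Bhat : (Fin k → Fin n → ℝ) → Matrix (Fin n) (Fin n) ℝ)
    (τ : (Fin k → Fin n → ℝ) → Fin k → Fin n → ℝ) : Prop :=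
  ∀ (z : Fin k → Fin n → ℝ) (u : Fin n → ℝ),
    shiftVec (τ z) (Fhat (τ z) + (Bhat (τ z)).mulVec u)
      = fderiv ℝ τ z (shiftVec z (F z + (B z).mulVec u))

theorem shiftVec_add_last {n k : ℕ} (hk : 0 < k) (f : Fin k → Fin n → ℝ) (a b : Fin n → ℝ) :
    shiftVec f (a + b) = shiftVec f a + Pi.single ⟨k - 1, by omega⟩ b := by
  funext i
  by_cases h : (i : ℕ) + 1 < k
  · have hi : i ≠ ⟨k - 1, by omega⟩ := by
      intro e
      have := congrArg Fin.val e
      simp only at this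
      omega
    simp [shiftVec, h, hi]
  · have hi : i = ⟨k - 1, Nat.sub_one_lt_of_lt hk⟩ := Fin.ext (by simp only; omega)
    subst hi
    simp [shiftVec, h]

/-- The part of the consistency identity that is linear in `u`. -/
theorem fderiv_last {n k : ℕ} (hk : 0 < k)
    {F Fhat : (Fin k → Fin n → ℝ) → Fin n → ℝ}
    {B Bhat : (Fin k → Fin n → ℝ) → Matrix (Fin n) (Fin n) ℝ}
    {τ : (Fin k → Fin n → ℝ) → Fin k → Fin n → ℝ}
    (hcons : Consistent F Fhat B Bhat τ) (z : Fin k → Fin n → ℝ) (u : Fin n → ℝ) :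
    fderiv ℝ τ z (Pi.single ⟨k - 1, by omega⟩ ((B z).mulVec u))
      = Pi.single ⟨k - 1, by omega⟩ ((Bhat (τ z)).mulVec u) := by
  have h0 := hcons z 0
  have hu := hcons z u
  rw [Matrix.mulVec_zero, Matrix.mulVec_zero, add_zero, add_zero] at h0
  rw [shiftVec_add_last hk, shiftVec_add_last hk, map_add, h0] at hu
  exact (add_left_cancel hu).symm

theorem stmt1 {n k : ℕ} (hn : 1 ≤ n) (hk : 0 < k)
    (F Fhat : (Fin k → Fin n → ℝ) → Fin n → ℝ)
    (B Bhat : (Fin k → Fin n → ℝ) → Matrix (Fin n) (Fin n) ℝ)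
    (bh bhath : ℝ) (hbh : 0 < bh) (hbhath : 0 < bhath)
    (hBdiag : ∀ z, (B z).IsDiag) (hBpos : ∀ z a, bh ≤ B z a a)
    (hBhatdiag : ∀ zh, (Bhat zh).IsDiag) (hBhatpos : ∀ zh a, bhath ≤ Bhat zh a a)
    (τ : (Fin k → Fin n → ℝ) → Fin k → Fin n → ℝ)
    (hτ : Differentiable ℝ τ)
    (hcons : Consistent F Fhat B Bhat τ) :
    ∀ z : Fin k → Fin n → ℝ,
      (∀ i : Fin k, (i : ℕ) < k - 1 → jacBlock τ z i ⟨k - 1, by omega⟩ = 0)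
      ∧ jacBlock τ z ⟨k - 1, by omega⟩ ⟨k - 1, by omega⟩ = Bhat (τ z) * (B z)⁻¹
      ∧ (Bhat (τ z) * (B z)⁻¹).IsDiag
      ∧ (∀ a : Fin n, 0 < (Bhat (τ z) * (B z)⁻¹) a a) := by
  intro z
  obtain ⟨d, hd⟩ : ∃ d, Matrix.diagonal d = B z := ⟨_, (hBdiag z).diagonal_diag⟩
  obtain ⟨e, he⟩ : ∃ e, Matrix.diagonal e = Bhat (τ z) := ⟨_, (hBhatdiag (τ z)).diagonal_diag⟩
  have hdpos : ∀ a, 0 < d a := fun a => by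
    have := hBpos z a
    rw [← hd, Matrix.diagonal_apply_eq] at this
    linarith
  have hepos : ∀ a, 0 < e a := fun a => by
    have := hBhatpos (τ z) a
    rw [← he, Matrix.diagonal_apply_eq] at this
    linarith
  have hinv : (B z)⁻¹ = Matrix.diagonal fun a => (d a)⁻¹ := by
    apply Matrix.inv_eq_right_inv
    rw [← hd, Matrix.diagonal_mul_diagonal, ← Matrix.diagonal_one]
    congr 1
    funext a
    exact mul_inv_cancel₀ (hdpos a).ne'
  have hprod : Bhat (τ z) * (B z)⁻¹ = Matrix.diagonal fun a => e a * (d a)⁻¹ := by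
    rw [hinv, ← he, Matrix.diagonal_mul_diagonal]
  have key : ∀ b : Fin n,
      fderiv ℝ τ z (Pi.single ⟨k - 1, by omega⟩ (Pi.single b 1))
        = Pi.single ⟨k - 1, by omega⟩ (Pi.single b (e b * (d b)⁻¹)) := by
    intro b
    -- The input `u = (d b)⁻¹ • e_b` is the one with `B(z) u = e_b`.
    have h := fderiv_last hk hcons z (Pi.single b (d b)⁻¹)
    rw [← hd, ← he, Matrix.diagonal_mulVec_single, Matrix.diagonal_mulVec_single,
      mul_inv_cancel₀ (hdpos b).ne'] at h
    exact h
  refine ⟨fun i hi => ?_, ?_, ?_, fun a => ?_⟩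
  · have hne : i ≠ ⟨k - 1, by omega⟩ := fun h => by
      have := congrArg Fin.val h
      simp only at this
      omega
    ext a b
    simp [jacBlock, key, hne]
  · rw [hprod]
    ext a b
    by_cases hab : a = b
    · subst hab
      simp [jacBlock, key]
    · simp [jacBlock, key, hab]
  · rw [hprod]
    exact Matrix.isDiag_diagonal _
  · rw [hprod, Matrix.diagonal_apply_eq]
    exact mul_pos (hepos a) (inv_pos.mpr (hdpos a))
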